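/- arXiv:1906.04785 — 2 statements merged into one kernel-verified Lean document; each statement's English description precedes it below -/
import Mathlib

section
/- Let ν ∈ ℝ and μ ∈ ℝ with μ > |ν|. Then ∫₀^∞ x^{μ−1} K_ν(x) dx = 2^{μ−2} Γ((μ − ν)/2) Γ((μ + ν)/2), where K_ν(x) = ∫₀^∞ e^{−x cosh t} cosh(νt) dt and Γ is the Gamma function. -/
open MeasureTheory

/-- The modified Bessel function of the second kind,
`K_ν(x) = ∫₀^∞ e^{−x cosh t} cosh(νt) dt`. -/
noncomputable def besselK (ν x : ℝ) : ℝ :=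
  ∫ t in Set.Ioi (0 : ℝ), Real.exp (-(x * Real.cosh t)) * Real.cosh (ν * t)

/-!
Exchanging the two integrals turns the Mellin transform of `K_ν` into `Γ(μ)` times
`∫₀^∞ cosh(νt) (cosh t)^{-μ} dt`. Since `cosh` is even, this is half the integral of
`e^{νt} (cosh t)^{-μ}` over the whole line, and the logistic substitution
`x = 1 / (1 + e^{-2t}) = e^t / (2 cosh t)`, `1 - x = e^{-t} / (2 cosh t)` identifies that integral
with the Beta integral `B((μ + ν)/2, (μ - ν)/2)` up to a power of two; the factor `Γ(μ)` cancels
the denominator of the Beta function.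
-/

section Beta

open Real Set ProbabilityTheory

theorem integral_rpow_mul_one_sub_rpow {a b : ℝ} (ha : 0 < a) (hb : 0 < b) :
    ∫ x in Ioo (0 : ℝ) 1, x ^ (a - 1) * (1 - x) ^ (b - 1) = beta a b := by
  have ofReal_integrand : ∀ x ∈ Ioo (0 : ℝ) 1,
      (x : ℂ) ^ ((a : ℂ) - 1) * (1 - (x : ℂ)) ^ ((b : ℂ) - 1)
        = ((x ^ (a - 1) * (1 - x) ^ (b - 1) : ℝ) : ℂ) := fun x hx ↦ by
    rw [Complex.ofReal_mul, Complex.ofReal_cpow hx.1.le,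
      Complex.ofReal_cpow (sub_nonneg.2 hx.2.le)]
    push_cast
    rfl
  rw [beta_eq_betaIntegralReal a b ha hb, Complex.betaIntegral,
    intervalIntegral.integral_of_le zero_le_one, integral_Ioc_eq_integral_Ioo,
    setIntegral_congr_fun measurableSet_Ioo ofReal_integrand, integral_complex_ofReal,
    Complex.ofReal_re]

theorem integral_Ioo_zero_one_eq_integral_sigmoid {E : Type*} [NormedAddCommGroup E]
    [NormedSpace ℝ E] (f : ℝ → E) :
    ∫ x in Ioo (0 : ℝ) 1, f x = ∫ t, (sigmoid t * sigmoid (-t)) • f (sigmoid t) := by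
  have hderiv : ∀ t ∈ univ, HasDerivWithinAt sigmoid (sigmoid t * sigmoid (-t)) univ t :=
    fun t _ ↦ (sigmoid_neg t ▸ hasDerivAt_sigmoid t).hasDerivWithinAt
  have hchange := integral_image_eq_integral_abs_deriv_smul MeasurableSet.univ hderiv
    sigmoid_injective.injOn f
  have habs : ∀ t, |sigmoid t * sigmoid (-t)| = sigmoid t * sigmoid (-t) :=
    fun t ↦ abs_of_pos (mul_pos (sigmoid_pos t) (sigmoid_pos (-t)))
  simpa only [image_univ, range_sigmoid, setIntegral_univ, habs] using hchange

theorem integral_sigmoid_rpow_mul_sigmoid_neg_rpow {a b : ℝ} (ha : 0 < a) (hb : 0 < b) :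
    ∫ t, sigmoid t ^ a * sigmoid (-t) ^ b = beta a b := by
  rw [← integral_rpow_mul_one_sub_rpow ha hb, integral_Ioo_zero_one_eq_integral_sigmoid]
  congr 1 with t
  have hpos := sigmoid_pos t
  have hpos_neg := sigmoid_pos (-t)
  rw [← sigmoid_neg, rpow_sub_one hpos.ne', rpow_sub_one hpos_neg.ne', smul_eq_mul]
  field_simp

theorem sigmoid_two_mul (t : ℝ) : sigmoid (2 * t) = exp t / (2 * cosh t) := by
  rw [sigmoid_def, cosh_eq, show -(2 * t) = -t + -t by ring, exp_add, exp_neg]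
  field_simp

theorem sigmoid_two_mul_rpow_mul_sigmoid_neg_rpow (a b t : ℝ) :
    sigmoid (2 * t) ^ a * sigmoid (-(2 * t)) ^ b
      = exp ((a - b) * t) / (2 * cosh t) ^ (a + b) := by
  have hcosh : 0 < 2 * cosh t := mul_pos two_pos (cosh_pos t)
  rw [← mul_neg, sigmoid_two_mul, sigmoid_two_mul, cosh_neg, div_rpow (exp_nonneg t) hcosh.le,
    div_rpow (exp_nonneg (-t)) hcosh.le, div_mul_div_comm, ← rpow_add hcosh, ← exp_mul, ← exp_mul,
    ← exp_add]
  ring_nf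

theorem integral_exp_div_two_mul_cosh_rpow {a b : ℝ} (ha : 0 < a) (hb : 0 < b) :
    ∫ t, exp ((a - b) * t) / (2 * cosh t) ^ (a + b) = beta a b / 2 := by
  simp_rw [← sigmoid_two_mul_rpow_mul_sigmoid_neg_rpow]
  rw [Measure.integral_comp_mul_left fun s ↦ sigmoid s ^ a * sigmoid (-s) ^ b,
    integral_sigmoid_rpow_mul_sigmoid_neg_rpow ha hb, abs_of_pos (by positivity), smul_eq_mul]
  ring

theorem integrable_exp_div_two_mul_cosh_rpow {a b : ℝ} (ha : 0 < a) (hb : 0 < b) :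
    Integrable fun t ↦ exp ((a - b) * t) / (2 * cosh t) ^ (a + b) :=
  .of_integral_ne_zero <| by
    rw [integral_exp_div_two_mul_cosh_rpow ha hb]
    exact (half_pos (beta_pos ha hb)).ne'

theorem integral_Ioi_zero_add_comp_neg {E : Type*} [NormedAddCommGroup E] [NormedSpace ℝ E]
    {f : ℝ → E} (hf : Integrable f) :
    ∫ t in Ioi (0 : ℝ), (f t + f (-t)) = ∫ t, f t := by
  rw [integral_add hf.integrableOn hf.comp_neg.integrableOn, integral_comp_neg_Ioi, neg_zero,
    add_comm, intervalIntegral.integral_Iic_add_Ioi hf.integrableOn hf.integrableOn]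

theorem cosh_mul_div_cosh_rpow_eq_exp_add_exp_neg (c s t : ℝ) :
    cosh (c * t) / cosh t ^ s
      = 2 ^ (s - 1) * (exp (c * t) / (2 * cosh t) ^ s + exp (c * -t) / (2 * cosh (-t)) ^ s) := by
  have hcosh := cosh_pos t
  rw [cosh_neg, mul_rpow two_pos.le hcosh.le, cosh_eq (c * t), rpow_sub_one two_ne_zero, mul_neg]
  field_simp

theorem integrableOn_cosh_div_cosh_rpow {a b : ℝ} (ha : 0 < a) (hb : 0 < b) :
    IntegrableOn (fun t ↦ cosh ((a - b) * t) / cosh t ^ (a + b)) (Ioi 0) := by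
  have hexp := integrable_exp_div_two_mul_cosh_rpow ha hb
  simp_rw [cosh_mul_div_cosh_rpow_eq_exp_add_exp_neg]
  exact ((hexp.add hexp.comp_neg).const_mul _).integrableOn

theorem integral_cosh_div_cosh_rpow {a b : ℝ} (ha : 0 < a) (hb : 0 < b) :
    ∫ t in Ioi (0 : ℝ), cosh ((a - b) * t) / cosh t ^ (a + b) = 2 ^ (a + b - 2) * beta a b := by
  simp_rw [cosh_mul_div_cosh_rpow_eq_exp_add_exp_neg]
  rw [integral_const_mul,
    integral_Ioi_zero_add_comp_neg (integrable_exp_div_two_mul_cosh_rpow ha hb),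
    integral_exp_div_two_mul_cosh_rpow ha hb, rpow_sub two_pos, rpow_sub two_pos, rpow_one,
    rpow_two]
  ring

end Beta

section Laplace

open Real Set

variable {α E : Type*} [MeasurableSpace α] [NormedAddCommGroup E] [NormedSpace ℝ E]
  {ρ : Measure α} {φ : α → ℝ} {g : α → E} {s : ℝ}

theorem integrable_rpow_mul_exp_neg_mul_smul [SFinite ρ] (hs : 0 < s) (hφ : AEMeasurable φ ρ)
    (hφ_pos : ∀ᵐ t ∂ρ, 0 < φ t) (hg : AEStronglyMeasurable g ρ)
    (hint : Integrable (fun t ↦ (1 / φ t) ^ s • g t) ρ) :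
    Integrable (fun p : ℝ × α ↦ (p.1 ^ (s - 1) * exp (-(φ p.2 * p.1))) • g p.2)
      ((volume.restrict (Ioi 0)).prod ρ) := by
  have hmeas : AEStronglyMeasurable
      (fun p : ℝ × α ↦ (p.1 ^ (s - 1) * exp (-(φ p.2 * p.1))) • g p.2)
      ((volume.restrict (Ioi 0)).prod ρ) := by
    have hpow : AEMeasurable (fun p : ℝ × α ↦ p.1 ^ (s - 1)) ((volume.restrict (Ioi 0)).prod ρ) :=
      (measurable_fst.pow_const _).aemeasurable
    have hexp : AEMeasurable (fun p : ℝ × α ↦ exp (-(φ p.2 * p.1)))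
        ((volume.restrict (Ioi 0)).prod ρ) :=
      (hφ.comp_snd.mul measurable_fst.aemeasurable).neg.exp
    exact (hpow.mul hexp).aestronglyMeasurable.smul hg.comp_snd
  refine (integrable_prod_iff' hmeas).2 ⟨?_, ?_⟩
  · filter_upwards [hφ_pos] with t ht
    refine Integrable.smul_const (.of_integral_ne_zero ?_) (g t)
    rw [integral_rpow_mul_exp_neg_mul_Ioi hs ht]
    positivity
  · refine (hint.norm.const_mul (Gamma s)).congr ?_
    filter_upwards [hφ_pos] with t ht
    have norm_integrand : ∀ x ∈ Ioi (0 : ℝ), ‖(x ^ (s - 1) * exp (-(φ t * x))) • g t‖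
        = x ^ (s - 1) * exp (-(φ t * x)) * ‖g t‖ := fun x (hx : 0 < x) ↦ by
      rw [norm_smul, norm_of_nonneg (by positivity)]
    rw [setIntegral_congr_fun measurableSet_Ioi norm_integrand, integral_mul_const,
      integral_rpow_mul_exp_neg_mul_Ioi hs ht, norm_smul, norm_of_nonneg (by positivity)]
    ring

theorem integral_rpow_smul_integral_exp_neg_mul_smul [SFinite ρ] [CompleteSpace E] (hs : 0 < s)
    (hφ : AEMeasurable φ ρ) (hφ_pos : ∀ᵐ t ∂ρ, 0 < φ t) (hg : AEStronglyMeasurable g ρ)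
    (hint : Integrable (fun t ↦ (1 / φ t) ^ s • g t) ρ) :
    ∫ x in Ioi (0 : ℝ), x ^ (s - 1) • ∫ t, exp (-(φ t * x)) • g t ∂ρ
      = Gamma s • ∫ t, (1 / φ t) ^ s • g t ∂ρ := by
  calc ∫ x in Ioi (0 : ℝ), x ^ (s - 1) • ∫ t, exp (-(φ t * x)) • g t ∂ρ
      = ∫ x in Ioi (0 : ℝ), ∫ t, (x ^ (s - 1) * exp (-(φ t * x))) • g t ∂ρ := by
        simp_rw [mul_smul, integral_smul]
    _ = ∫ t, (∫ x in Ioi (0 : ℝ), (x ^ (s - 1) * exp (-(φ t * x))) • g t) ∂ρ :=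
        integral_integral_swap (integrable_rpow_mul_exp_neg_mul_smul hs hφ hφ_pos hg hint)
    _ = ∫ t, Gamma s • (1 / φ t) ^ s • g t ∂ρ := by
        refine integral_congr_ae ?_
        filter_upwards [hφ_pos] with t ht
        rw [integral_smul_const, integral_rpow_mul_exp_neg_mul_Ioi hs ht, mul_comm, mul_smul]
    _ = Gamma s • ∫ t, (1 / φ t) ^ s • g t ∂ρ := integral_smul _ _

end Laplace

theorem integral_rpow_mul_besselK {ν μ : ℝ} (hμ : 0 < μ)
    (hint : IntegrableOn (fun t ↦ Real.cosh (ν * t) / Real.cosh t ^ μ) (Set.Ioi 0)) :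
    ∫ x in Set.Ioi (0 : ℝ), x ^ (μ - 1) * besselK ν x
      = Real.Gamma μ * ∫ t in Set.Ioi (0 : ℝ), Real.cosh (ν * t) / Real.cosh t ^ μ := by
  have hcosh : ∀ t, Real.cosh (ν * t) / Real.cosh t ^ μ
      = (1 / Real.cosh t) ^ μ • Real.cosh (ν * t) := fun t ↦ by
    rw [one_div, Real.inv_rpow (Real.cosh_pos t).le, smul_eq_mul, div_eq_inv_mul]
  simp_rw [hcosh] at hint ⊢
  simpa only [besselK, smul_eq_mul, mul_comm (Real.cosh _) (_ : ℝ)] using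
    integral_rpow_smul_integral_exp_neg_mul_smul hμ (by fun_prop)
      (.of_forall Real.cosh_pos) (Continuous.aestronglyMeasurable (by fun_prop)) hint

/-- Mellin transform of the modified Bessel function of the second kind: for `μ > |ν|`,
`∫₀^∞ x^{μ−1} K_ν(x) dx = 2^{μ−2} Γ((μ − ν)/2) Γ((μ + ν)/2)`. -/
theorem mellin_besselK
    (ν μ : ℝ) (h : |ν| < μ) :
    ∫ x in Set.Ioi (0 : ℝ), x ^ (μ - 1) * besselK ν x
      = 2 ^ (μ - 2) * Real.Gamma ((μ - ν) / 2) * Real.Gamma ((μ + ν) / 2) := by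
  obtain ⟨hneg, hlt⟩ := abs_lt.1 h
  have ha : 0 < (μ + ν) / 2 := by linarith
  have hb : 0 < (μ - ν) / 2 := by linarith
  have hμ : 0 < μ := by linarith
  have hadd : (μ + ν) / 2 + (μ - ν) / 2 = μ := by ring
  have hsub : (μ + ν) / 2 - (μ - ν) / 2 = ν := by ring
  have hint := integrableOn_cosh_div_cosh_rpow ha hb
  have hval := integral_cosh_div_cosh_rpow ha hb
  rw [hadd, hsub] at hint hval
  rw [integral_rpow_mul_besselK hμ hint, hval, ProbabilityTheory.beta, hadd]
  have hGamma : Real.Gamma μ ≠ 0 := (Real.Gamma_pos_of_pos hμ).ne'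
  field_simp
end

section
/- For every ν ∈ ℝ, I_ν(x) · √(2πx) · e^{−x} → 1 as x → ∞, where I_ν(x) = Σ_{k=0}^∞ (x/2)^{2k+ν}/(k! Γ(k + ν + 1)); that is, I_ν(x) ∼ e^x/√(2πx) as x → ∞. -/
open MeasureTheory

/-- The modified Bessel function of the first kind,
`I_ν(x) = Σ_{k=0}^∞ (x/2)^{2k+ν}/(k! Γ(k + ν + 1))`. -/
noncomputable def besselI (ν x : ℝ) : ℝ :=
  ∑' k : ℕ, (x / 2) ^ (2 * (k : ℝ) + ν) / ((k.factorial : ℝ) * Real.Gamma ((k : ℝ) + ν + 1))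

/-!
For `ν > -1/2`, integrating the power series of `cosh (x t)` against the weight `(1 - t²)^(ν - 1/2)`
turns each even moment into a beta value; together with the duplication formula for `Γ` this gives
Poisson's integral
`I_ν(x) = 2 (x/2)^ν / (√π Γ(ν + 1/2)) ∫₀¹ cosh (x t) (1 - t²)^(ν - 1/2) dt`.
The half `e^{-xt} / 2` of `cosh (x t)` contributes an exponentially small amount relative to `e^x`,
and after `u = 1 - t` the other half is a Laplace integral of `u^(ν - 1/2) (2 - u)^(ν - 1/2)`,
whose leading term is given by Watson's lemma. Smaller `ν` are reached by downward induction through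
`I_{ν-1}(x) = I_{ν+1}(x) + (2ν/x) I_ν(x)`, in which the last summand is of lower order.
-/

open Real Set Filter Topology

lemma inv_Gamma_eq_mul_inv_Gamma_add_one (s : ℝ) : (Gamma s)⁻¹ = s * (Gamma (s + 1))⁻¹ := by
  rcases eq_or_ne s 0 with rfl | hs
  · simp
  · rw [Gamma_add_one hs, mul_inv, mul_inv_cancel_left₀ hs]

lemma Gamma_natCast_add_half_eq_factorial (k : ℕ) :
    Gamma (k + 1 / 2) = (2 * k).factorial * √π / (4 ^ k * k.factorial) := by
  have duplication := Gamma_mul_Gamma_add_half (k + 1 / 2)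
  have exponent : (1 : ℝ) - 2 * (k + 1 / 2) = -((2 * k : ℕ) : ℝ) := by push_cast; ring
  have argument : (2 : ℝ) * (k + 1 / 2) = (2 * k : ℕ) + 1 := by push_cast; ring
  rw [exponent, argument, add_assoc, add_halves, Gamma_nat_eq_factorial, Gamma_nat_eq_factorial,
    rpow_neg zero_le_two, rpow_natCast, pow_mul] at duplication
  rw [eq_div_iff (by positivity), mul_comm (4 ^ k), ← mul_assoc, duplication]
  field_simp
  norm_num

lemma integral_rpow_mul_one_sub_rpow_s18 {p q : ℝ} (hp : 0 < p) (hq : 0 < q) :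
    ∫ u in (0 : ℝ)..1, u ^ (p - 1) * (1 - u) ^ (q - 1) = ProbabilityTheory.beta p q := by
  rw [ProbabilityTheory.beta_eq_betaIntegralReal p q hp hq, Complex.betaIntegral,
    ← Complex.ofReal_re (∫ u in (0 : ℝ)..1, _), ← intervalIntegral.integral_ofReal]
  congr 1
  refine intervalIntegral.integral_congr fun u hu ↦ ?_
  rw [uIcc_of_le zero_le_one] at hu
  simp only [Complex.ofReal_mul, Complex.ofReal_cpow hu.1,
    Complex.ofReal_cpow (sub_nonneg.2 hu.2), Complex.ofReal_sub, Complex.ofReal_one]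

lemma integral_rpow_mul_one_sub_sq_rpow {p q : ℝ} (hp : 0 < p) (hq : 0 < q) :
    ∫ t in (0 : ℝ)..1, t ^ (2 * p - 1) * (1 - t ^ 2) ^ (q - 1) =
      ProbabilityTheory.beta p q / 2 := by
  have substitution := intervalIntegral.integral_comp_mul_deriv_of_deriv_nonneg
    (a := 0) (b := 1) (f := fun t ↦ t ^ 2) (f' := fun t ↦ 2 * t)
    (g := fun u ↦ u ^ (p - 1) * (1 - u) ^ (q - 1)) (by fun_prop)
    (fun t _ ↦ by simpa using hasDerivAt_pow 2 t)
    (fun t ht ↦ mul_nonneg zero_le_two (by simpa using ht.1.le))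
  norm_num only at substitution
  rw [← integral_rpow_mul_one_sub_rpow_s18 hp hq, ← substitution, ← intervalIntegral.integral_div,
    intervalIntegral.integral_of_le zero_le_one, intervalIntegral.integral_of_le zero_le_one]
  refine setIntegral_congr_fun measurableSet_Ioc fun t ht ↦ ?_
  have power : t ^ (2 * p - 1) = (t ^ 2) ^ (p - 1) * t := by
    rw [← rpow_natCast, ← rpow_mul ht.1.le, ← rpow_add_one ht.1.ne']
    congr 1
    push_cast
    ring
  simp only [Function.comp_apply, power]
  ring

lemma intervalIntegrable_one_sub_sq_rpow {a : ℝ} (ha : -1 < a) :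
    IntervalIntegrable (fun t : ℝ ↦ (1 - t ^ 2) ^ a) volume 0 1 := by
  have singular_factor : IntervalIntegrable (fun t : ℝ ↦ (1 - t) ^ a) volume 0 1 := by
    simpa using
      ((intervalIntegral.intervalIntegrable_rpow' (a := 0) (b := 1) ha).comp_sub_left 1).symm
  have regular_factor : ContinuousOn (fun t : ℝ ↦ (1 + t) ^ a) (uIcc 0 1) := by
    rw [uIcc_of_le zero_le_one]
    exact ContinuousOn.rpow_const (by fun_prop) fun t ht ↦ Or.inl (by linarith [ht.1])
  refine (singular_factor.mul_continuousOn regular_factor).congr fun t ht ↦ ?_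
  rw [uIoc_of_le zero_le_one] at ht
  simp only [← mul_rpow (sub_nonneg.2 ht.2) (by linarith [ht.1] : 0 ≤ 1 + t)]
  ring_nf

lemma hasSum_integral_cosh_mul {w : ℝ → ℝ} {a b : ℝ} (hw : IntervalIntegrable w volume a b)
    (x : ℝ) :
    HasSum (fun k : ℕ ↦ ∫ t in a..b, (x * t) ^ (2 * k) / (2 * k).factorial * w t)
      (∫ t in a..b, cosh (x * t) * w t) := by
  have norm_term (k : ℕ) (t : ℝ) : ‖(x * t) ^ (2 * k) / (2 * k).factorial * w t‖ =
      (x * t) ^ (2 * k) / (2 * k).factorial * |w t| := by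
    rw [norm_mul, norm_eq_abs, norm_eq_abs, abs_of_nonneg]
    have := (even_two_mul k).pow_nonneg (x * t)
    positivity
  have hasSum_norm (t : ℝ) := (hasSum_cosh (x * t)).mul_right |w t|
  refine intervalIntegral.hasSum_integral_of_dominated_convergence
    (fun k t ↦ (x * t) ^ (2 * k) / (2 * k).factorial * |w t|) (fun k ↦ ?_)
    (fun k ↦ ae_of_all _ fun t _ ↦ (norm_term k t).le)
    (ae_of_all _ fun t _ ↦ (hasSum_norm t).summable) ?_
    (ae_of_all _ fun t _ ↦ (hasSum_cosh (x * t)).mul_right (w t))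
  · exact (Continuous.aestronglyMeasurable (by fun_prop)).mul hw.def'.aestronglyMeasurable
  · simp only [(hasSum_norm _).tsum_eq]
    exact hw.abs.continuousOn_mul (by fun_prop)

lemma rpow_mul_integral_exp_neg_mul {x : ℝ} (hx : 0 < x) (p : ℝ) (g : ℝ → ℝ) :
    x ^ p * ∫ u in Ioi 0, exp (-(x * u)) * u ^ (p - 1) * g u =
      ∫ s in Ioi 0, exp (-s) * s ^ (p - 1) * g (x⁻¹ * s) := by
  have rescale := integral_comp_mul_left_Ioi
    (fun s ↦ exp (-s) * s ^ (p - 1) * g (x⁻¹ * s)) 0 hx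
  rw [mul_zero, smul_eq_mul, eq_inv_mul_iff_mul_eq₀ hx.ne'] at rescale
  rw [← rescale, ← integral_const_mul, ← integral_const_mul]
  refine setIntegral_congr_fun measurableSet_Ioi fun u hu ↦ ?_
  simp only [inv_mul_cancel_left₀ hx.ne', mul_rpow hx.le (mem_Ioi.1 hu).le, rpow_sub_one hx.ne']
  field_simp

lemma tendsto_rpow_mul_integral_exp_neg_mul {p C L : ℝ} {g : ℝ → ℝ} (hp : 0 < p)
    (hg : AEStronglyMeasurable g (volume.restrict (Ioi 0))) (hgC : ∀ u > 0, |g u| ≤ C)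
    (hgL : Tendsto g (𝓝[>] 0) (𝓝 L)) :
    Tendsto (fun x : ℝ ↦ x ^ p * ∫ u in Ioi 0, exp (-(x * u)) * u ^ (p - 1) * g u) atTop
      (𝓝 (Gamma p * L)) := by
  suffices Tendsto (fun x : ℝ ↦ ∫ s in Ioi 0, exp (-s) * s ^ (p - 1) * g (x⁻¹ * s)) atTop
      (𝓝 (∫ s in Ioi 0, exp (-s) * s ^ (p - 1) * L)) by
    rw [Gamma_eq_integral hp, ← integral_mul_const]
    refine this.congr' ?_
    filter_upwards [eventually_gt_atTop 0] with x hx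
    exact (rpow_mul_integral_exp_neg_mul hx p g).symm
  refine tendsto_integral_filter_of_dominated_convergence
    (fun s ↦ exp (-s) * s ^ (p - 1) * C) ?measurable ?bound
    ((GammaIntegral_convergent hp).mul_const C) ?pointwise
  case measurable =>
    filter_upwards [eventually_gt_atTop 0] with x hx
    have scaling : Measure.QuasiMeasurePreserving (fun s ↦ x⁻¹ * s)
        (volume.restrict (Ioi 0)) (volume.restrict (Ioi 0)) :=
      (Measure.quasiMeasurePreserving_smul volume (inv_pos.2 hx).ne').restrict
        fun s hs ↦ mul_pos (inv_pos.2 hx) hs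
    exact (GammaIntegral_convergent hp).aestronglyMeasurable.mul
      (hg.comp_quasiMeasurePreserving scaling)
  case bound =>
    filter_upwards [eventually_gt_atTop 0] with x hx
    filter_upwards [ae_restrict_mem measurableSet_Ioi] with s hs
    have weight_nonneg : 0 ≤ exp (-s) * s ^ (p - 1) :=
      mul_nonneg (exp_nonneg _) (rpow_nonneg (mem_Ioi.1 hs).le _)
    rw [norm_mul, norm_of_nonneg weight_nonneg, norm_eq_abs]
    exact mul_le_mul_of_nonneg_left (hgC _ (mul_pos (inv_pos.2 hx) hs)) weight_nonneg
  case pointwise =>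
    filter_upwards [ae_restrict_mem measurableSet_Ioi] with s hs
    have scaled_to_zero : Tendsto (fun x : ℝ ↦ x⁻¹ * s) atTop (𝓝[>] 0) := by
      refine tendsto_nhdsWithin_iff.2 ⟨by simpa using tendsto_inv_atTop_zero.mul_const s, ?_⟩
      filter_upwards [eventually_gt_atTop 0] with x hx using mul_pos (inv_pos.2 hx) hs
    exact (hgL.comp scaled_to_zero).const_mul _

lemma abs_two_sub_rpow_le {u : ℝ} (hu : u ∈ Icc (0 : ℝ) 1) (a : ℝ) :
    |(2 - u) ^ a| ≤ 2 ^ |a| := by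
  have one_le : 1 ≤ 2 - u := by linarith [hu.2]
  calc |(2 - u) ^ a| = (2 - u) ^ a := abs_of_nonneg (rpow_nonneg (by linarith) a)
    _ ≤ (2 - u) ^ |a| := rpow_le_rpow_of_exponent_le one_le (le_abs_self a)
    _ ≤ 2 ^ |a| := rpow_le_rpow (by linarith) (by linarith [hu.1]) (abs_nonneg a)

lemma integral_exp_neg_mul_one_sub_mul_one_sub_sq_rpow (x a : ℝ) :
    ∫ t in (0 : ℝ)..1, exp (-(x * (1 - t))) * (1 - t ^ 2) ^ a =
      ∫ u in Ioi 0, exp (-(x * u)) * u ^ a * (Ioc 0 1).indicator (fun u ↦ (2 - u) ^ a) u := by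
  have reflect := intervalIntegral.integral_comp_sub_left (a := 0) (b := 1)
    (fun t ↦ exp (-(x * (1 - t))) * (1 - t ^ 2) ^ a) 1
  rw [sub_self, sub_zero] at reflect
  simp only [← indicator_mul_right (Ioc 0 1) (fun u ↦ exp (-(x * u)) * u ^ a)]
  rw [← reflect, setIntegral_indicator measurableSet_Ioc,
    inter_eq_self_of_subset_right Ioc_subset_Ioi_self, intervalIntegral.integral_of_le zero_le_one]
  refine setIntegral_congr_fun measurableSet_Ioc fun u hu ↦ ?_
  have factor : 1 - (1 - u) ^ 2 = u * (2 - u) := by ring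
  simp only [factor, sub_sub_cancel, mul_rpow hu.1.le (by linarith [hu.2] : 0 ≤ 2 - u), mul_assoc]

lemma tendsto_rpow_mul_integral_exp_neg_mul_one_sub {p : ℝ} (hp : 0 < p) :
    Tendsto (fun x : ℝ ↦
        x ^ p * ∫ t in (0 : ℝ)..1, exp (-(x * (1 - t))) * (1 - t ^ 2) ^ (p - 1))
      atTop (𝓝 (Gamma p * 2 ^ (p - 1))) := by
  simp_rw [integral_exp_neg_mul_one_sub_mul_one_sub_sq_rpow]
  refine tendsto_rpow_mul_integral_exp_neg_mul (C := 2 ^ |p - 1|) hp ?_ (fun u _ ↦ ?_) ?_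
  · exact (Measurable.indicator (by fun_prop) measurableSet_Ioc).aestronglyMeasurable
  · rw [indicator_apply]
    split_ifs with hu
    · exact abs_two_sub_rpow_le (Ioc_subset_Icc_self hu) _
    · rw [abs_zero]
      positivity
  · have continuous_at_zero : Tendsto (fun u : ℝ ↦ (2 - u) ^ (p - 1)) (𝓝 0) (𝓝 (2 ^ (p - 1))) := by
      have : ContinuousAt (fun u : ℝ ↦ (2 - u) ^ (p - 1)) 0 :=
        ContinuousAt.rpow_const (by fun_prop) (Or.inl (by norm_num))
      simpa [ContinuousAt] using this
    refine (continuous_at_zero.mono_left nhdsWithin_le_nhds).congr' ?_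
    filter_upwards [Ioc_mem_nhdsGT zero_lt_one] with u hu
    rw [indicator_of_mem hu]

lemma tendsto_rpow_mul_exp_neg_mul_integral_exp_neg_mul {w : ℝ → ℝ} {a b : ℝ} (ha : 0 ≤ a)
    (hab : a ≤ b) (hw : IntervalIntegrable w volume a b) (p : ℝ) :
    Tendsto (fun x : ℝ ↦ x ^ p * exp (-x) * ∫ t in a..b, exp (-(x * t)) * w t)
      atTop (𝓝 0) := by
  have prefactor : Tendsto (fun x : ℝ ↦ x ^ p * exp (-x)) atTop (𝓝 0) := by
    simpa using tendsto_rpow_mul_exp_neg_mul_atTop_nhds_zero p 1 one_pos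
  refine prefactor.zero_mul_isBoundedUnder_le
    (isBoundedUnder_of_eventually_le (a := ∫ t in a..b, |w t|) ?_)
  filter_upwards [eventually_ge_atTop 0] with x hx
  refine intervalIntegral.norm_integral_le_of_norm_le hab
    (ae_of_all _ fun t ht ↦ ?_) hw.abs
  rw [norm_mul, norm_of_nonneg (exp_nonneg _), norm_eq_abs]
  exact mul_le_of_le_one_left (abs_nonneg _)
    (exp_le_one_iff.2 (neg_nonpos.2 (mul_nonneg hx (ha.trans ht.1.le))))

lemma exp_neg_mul_integral_cosh_mul {w : ℝ → ℝ} {a b : ℝ}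
    (hw : IntervalIntegrable w volume a b) (x : ℝ) :
    exp (-x) * ∫ t in a..b, cosh (x * t) * w t =
      ((∫ t in a..b, exp (-(x * (1 - t))) * w t) +
        exp (-x) * ∫ t in a..b, exp (-(x * t)) * w t) / 2 := by
  rw [← intervalIntegral.integral_const_mul, ← intervalIntegral.integral_const_mul,
    ← intervalIntegral.integral_add (hw.continuousOn_mul (by fun_prop))
      ((hw.continuousOn_mul (by fun_prop)).const_mul _), ← intervalIntegral.integral_div]
  refine intervalIntegral.integral_congr fun t _ ↦ ?_
  have exponent : -(x * (1 - t)) = -x + x * t := by ring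
  simp only [exponent, exp_add, cosh_eq]
  ring

lemma tendsto_rpow_mul_exp_neg_mul_integral_cosh {p : ℝ} (hp : 0 < p) :
    Tendsto (fun x : ℝ ↦
        x ^ p * exp (-x) * ∫ t in (0 : ℝ)..1, cosh (x * t) * (1 - t ^ 2) ^ (p - 1))
      atTop (𝓝 (Gamma p * 2 ^ (p - 1) / 2)) := by
  have weight_integrable := intervalIntegrable_one_sub_sq_rpow (a := p - 1) (by linarith)
  have near_one := tendsto_rpow_mul_integral_exp_neg_mul_one_sub hp
  have negligible :=
    tendsto_rpow_mul_exp_neg_mul_integral_exp_neg_mul le_rfl zero_le_one weight_integrable p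
  have limit := (near_one.add negligible).div_const 2
  rw [add_zero] at limit
  refine limit.congr fun x ↦ ?_
  rw [mul_assoc (x ^ p) (exp (-x)) (∫ t in _..1, cosh _ * _),
    exp_neg_mul_integral_cosh_mul weight_integrable]
  ring

/-- The `k`-th term of the power series defining `besselI ν x`. -/
noncomputable def besselITerm (ν x : ℝ) (k : ℕ) : ℝ :=
  (x / 2) ^ (2 * (k : ℝ) + ν) / ((k.factorial : ℝ) * Gamma ((k : ℝ) + ν + 1))

lemma besselITerm_succ {ν x : ℝ} (hx : 0 < x) {k : ℕ} (hk : (k : ℝ) + ν + 1 ≠ 0) :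
    besselITerm ν x (k + 1) = (x / 2) ^ 2 / ((k + 1) * (k + ν + 1)) * besselITerm ν x k := by
  have exponent : 2 * ((k : ℝ) + 1) + ν = 2 * k + ν + (2 : ℕ) := by push_cast; ring
  have Gamma_argument : (k : ℝ) + 1 + ν + 1 = k + ν + 1 + 1 := by ring
  rw [besselITerm, besselITerm, Nat.factorial_succ, Nat.cast_mul, Nat.cast_succ, exponent,
    rpow_add (by positivity), rpow_natCast, Gamma_argument, Gamma_add_one hk]
  field_simp

lemma summable_besselITerm (ν : ℝ) {x : ℝ} (hx : 0 < x) : Summable (besselITerm ν x) := by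
  have ratio_tendsto : Tendsto (fun k : ℕ ↦ (x / 2) ^ 2 / ((k + 1) * (k + ν + 1))) atTop (𝓝 0) := by
    refine tendsto_const_nhds.div_atTop (Tendsto.atTop_mul_atTop₀ ?_ ?_)
    · exact tendsto_atTop_add_const_right _ _ tendsto_natCast_atTop_atTop
    · simp_rw [add_assoc]
      exact tendsto_atTop_add_const_right _ _ tendsto_natCast_atTop_atTop
  refine summable_of_ratio_norm_eventually_le one_half_lt_one ?_
  filter_upwards [ratio_tendsto.norm.eventually_le_const (by norm_num : ‖(0 : ℝ)‖ < 1 / 2),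
    tendsto_natCast_atTop_atTop.eventually_gt_atTop (-ν - 1)] with k ratio_le hk
  rw [besselITerm_succ hx (by linarith), norm_mul]
  exact mul_le_mul_of_nonneg_right ratio_le (norm_nonneg _)

lemma hasSum_besselITerm (ν : ℝ) {x : ℝ} (hx : 0 < x) :
    HasSum (besselITerm ν x) (besselI ν x) :=
  (summable_besselITerm ν hx).hasSum

lemma besselITerm_sub_one (ν : ℝ) {x : ℝ} (hx : 0 < x) (k : ℕ) :
    besselITerm (ν - 1) x k = 2 / x * (k * besselITerm ν x k + ν * besselITerm ν x k) := by
  have exponent : 2 * (k : ℝ) + (ν - 1) = 2 * k + ν - 1 := by ring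
  have Gamma_argument : (k : ℝ) + (ν - 1) + 1 = k + ν := by ring
  rw [besselITerm, besselITerm, exponent, Gamma_argument, rpow_sub_one (by positivity),
    div_mul_eq_div_mul_one_div _ _ (Gamma (k + ν)), one_div,
    inv_Gamma_eq_mul_inv_Gamma_add_one]
  field_simp

lemma natCast_add_one_mul_besselITerm_succ (ν : ℝ) {x : ℝ} (hx : 0 < x) (k : ℕ) :
    ((k + 1 : ℕ) : ℝ) * besselITerm ν x (k + 1) = x / 2 * besselITerm (ν + 1) x k := by
  have exponent : 2 * ((k : ℝ) + 1) + ν = 2 * k + (ν + 1) + 1 := by ring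
  have Gamma_argument : (k : ℝ) + 1 + ν + 1 = k + (ν + 1) + 1 := by ring
  rw [besselITerm, besselITerm, Nat.factorial_succ, Nat.cast_mul, Nat.cast_succ, exponent,
    rpow_add_one (by positivity), Gamma_argument]
  field_simp

lemma hasSum_natCast_mul_besselITerm (ν : ℝ) {x : ℝ} (hx : 0 < x) :
    HasSum (fun k : ℕ ↦ k * besselITerm ν x k) (x / 2 * besselI (ν + 1) x) := by
  rw [← hasSum_nat_add_iff' 1]
  simp only [natCast_add_one_mul_besselITerm_succ ν hx, Finset.sum_range_one, Nat.cast_zero,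
    zero_mul, sub_zero]
  exact (hasSum_besselITerm (ν + 1) hx).mul_left (x / 2)

theorem besselI_sub_one (ν : ℝ) {x : ℝ} (hx : 0 < x) :
    besselI (ν - 1) x = besselI (ν + 1) x + 2 * ν / x * besselI ν x := by
  have sum := ((hasSum_natCast_mul_besselITerm ν hx).add
    ((hasSum_besselITerm ν hx).mul_left ν)).mul_left (2 / x)
  rw [← funext (besselITerm_sub_one ν hx)] at sum
  rw [(hasSum_besselITerm (ν - 1) hx).unique sum]
  field_simp

lemma besselITerm_eq_integral {ν x : ℝ} (hν : -(1 / 2) < ν) (hx : 0 < x) (k : ℕ) :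
    besselITerm ν x k = (x / 2) ^ ν * (2 / (√π * Gamma (ν + 1 / 2))) *
      ∫ t in (0 : ℝ)..1, (x * t) ^ (2 * k) / (2 * k).factorial * (1 - t ^ 2) ^ (ν - 1 / 2) := by
  have moment := integral_rpow_mul_one_sub_sq_rpow (p := k + 1 / 2) (q := ν + 1 / 2)
    (by positivity) (by linarith)
  have hΓ : Gamma (ν + 1 / 2) ≠ 0 := (Gamma_pos_of_pos (by linarith)).ne'
  have even_exponent : 2 * ((k : ℝ) + 1 / 2) - 1 = (2 * k : ℕ) := by push_cast; ring
  have weight_exponent : ν + 1 / 2 - 1 = ν - 1 / 2 := by ring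
  have Gamma_argument : (k : ℝ) + 1 / 2 + (ν + 1 / 2) = k + ν + 1 := by ring
  simp only [even_exponent, weight_exponent, rpow_natCast, ProbabilityTheory.beta, Gamma_argument,
    Gamma_natCast_add_half_eq_factorial] at moment
  simp only [mul_pow, mul_div_right_comm _ (_ ^ (2 * k)), mul_assoc (_ / _),
    intervalIntegral.integral_const_mul, moment]
  have four_pow : (2 : ℝ) ^ (2 * k) = 4 ^ k := by rw [pow_mul]; norm_num
  have power : (x / 2) ^ (2 * (k : ℝ) + ν) = x ^ (2 * k) / 4 ^ k * (x / 2) ^ ν := by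
    rw [rpow_add (by positivity), ← four_pow, ← div_pow, ← rpow_natCast _ (2 * k)]
    push_cast
    rfl
  rw [besselITerm, power]
  -- otherwise `field_simp` renormalizes the argument of `Gamma` and no longer cancels it
  generalize Gamma (ν + 1 / 2) = c at hΓ ⊢
  field_simp

theorem besselI_eq_integral_cosh {ν x : ℝ} (hν : -(1 / 2) < ν) (hx : 0 < x) :
    besselI ν x = (x / 2) ^ ν * (2 / (√π * Gamma (ν + 1 / 2))) *
      ∫ t in (0 : ℝ)..1, cosh (x * t) * (1 - t ^ 2) ^ (ν - 1 / 2) := by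
  have hasSum_integral :=
    hasSum_integral_cosh_mul (intervalIntegrable_one_sub_sq_rpow (a := ν - 1 / 2) (by linarith)) x
  refine (hasSum_besselITerm ν hx).unique ?_
  rw [funext (besselITerm_eq_integral hν hx)]
  exact hasSum_integral.mul_left _

/-- The Bessel function `I_ν` divided by its expected asymptotic form `e^x / √(2πx)`. -/
noncomputable def besselIScaled (ν x : ℝ) : ℝ :=
  besselI ν x * √(2 * π * x) * exp (-x)

lemma besselIScaled_sub_one (ν : ℝ) {x : ℝ} (hx : 0 < x) :
    besselIScaled (ν - 1) x = besselIScaled (ν + 1) x + 2 * ν / x * besselIScaled ν x := by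
  rw [besselIScaled, besselI_sub_one ν hx, besselIScaled, besselIScaled]
  ring

lemma besselIScaled_eq_integral_cosh {ν x : ℝ} (hν : -(1 / 2) < ν) (hx : 0 < x) :
    besselIScaled ν x = 2 / (Gamma (ν + 1 / 2) * 2 ^ (ν - 1 / 2)) * (x ^ (ν + 1 / 2) * exp (-x) *
      ∫ t in (0 : ℝ)..1, cosh (x * t) * (1 - t ^ 2) ^ (ν - 1 / 2)) := by
  rw [besselIScaled, besselI_eq_integral_cosh hν hx, div_rpow hx.le zero_le_two, rpow_add hx,
    rpow_sub two_pos, ← sqrt_eq_rpow, ← sqrt_eq_rpow, sqrt_mul (by positivity),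
    sqrt_mul zero_le_two]
  field_simp

lemma tendsto_besselIScaled_of_neg_half_lt {ν : ℝ} (hν : -(1 / 2) < ν) :
    Tendsto (besselIScaled ν) atTop (𝓝 1) := by
  have hp : 0 < ν + 1 / 2 := by linarith
  have weight_exponent : ν + 1 / 2 - 1 = ν - 1 / 2 := by ring
  have limit := (tendsto_rpow_mul_exp_neg_mul_integral_cosh hp).const_mul
    (2 / (Gamma (ν + 1 / 2) * 2 ^ (ν - 1 / 2)))
  rw [weight_exponent, div_mul_div_cancel₀' two_ne_zero,
    div_self (mul_pos (Gamma_pos_of_pos hp) (by positivity)).ne'] at limit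
  refine limit.congr' ?_
  filter_upwards [eventually_gt_atTop 0] with x hx using
    (besselIScaled_eq_integral_cosh hν hx).symm

lemma tendsto_besselIScaled_sub_one {ν : ℝ} (h : Tendsto (besselIScaled ν) atTop (𝓝 1))
    (h_add_one : Tendsto (besselIScaled (ν + 1)) atTop (𝓝 1)) :
    Tendsto (besselIScaled (ν - 1)) atTop (𝓝 1) := by
  have coefficient : Tendsto (fun x : ℝ ↦ 2 * ν / x) atTop (𝓝 0) :=
    tendsto_const_nhds.div_atTop tendsto_id
  have limit := h_add_one.add (coefficient.mul h)
  rw [zero_mul, add_zero] at limit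
  refine limit.congr' ?_
  filter_upwards [eventually_gt_atTop 0] with x hx using (besselIScaled_sub_one ν hx).symm

/-- The asymptotic behaviour `I_ν(x) ∼ e^x/√(2πx)` as `x → ∞`: for every `ν ∈ ℝ`,
`I_ν(x) √(2πx) e^{−x} → 1` as `x → ∞`. -/
theorem besselI_asymptotic (ν : ℝ) :
    Filter.Tendsto
      (fun x : ℝ => besselI ν x * Real.sqrt (2 * Real.pi * x) * Real.exp (-x))
      Filter.atTop (nhds 1) := by
  change Tendsto (besselIScaled ν) atTop (𝓝 1)
  obtain ⟨n, hn⟩ := exists_nat_gt (-(1 / 2) - ν)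
  induction n generalizing ν with
  | zero => exact tendsto_besselIScaled_of_neg_half_lt (by simpa using hn)
  | succ n ih =>
    push_cast at hn
    have h_add_one := ih (ν + 1) (by linarith)
    have h_add_two := ih (ν + 1 + 1) (by linarith)
    simpa using tendsto_besselIScaled_sub_one h_add_one h_add_two
end
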